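/- Fix s ∈ ℕ. If ν is a finite nonnegative Borel measure on X×Y whose moments ν_d := ∫ x^{d_x} y^{d_y} dν satisfy ν_d = μ_d for all d ∈ D, then Σ_{d ∈ ℕ^n×ℕ, |d| ≤ s} μ_{2d} ≤ Σ_{d ∈ ℕ^n×ℕ, |d| ≤ s} ν_{2d}. -/

import Mathlib

/-!
On a compact set polynomials are dense, so finite measures there are determined by their moments.
The moments of `ν` with `d_y = 0` therefore identify its marginal on `X` as `λ`, and those with
`d_y = 1` identify the conditional expectation of `y` given `x` as `f x`. Since `y ↦ y ^ (2 * k)` is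
convex, the conditional Jensen inequality gives `f x ^ (2 * k) ≤ E[y ^ (2 * k) | x]`; integrating
against the nonnegative weight `x ^ (2 * a)` compares the moments of `μ` and `ν` one by one.
-/

open MeasureTheory Set

noncomputable section

/-- The finite set of multi-indices `d ∈ ℕ^n × ℕ` with `|d| ≤ s`. -/
def idx (n s : ℕ) : Finset ((Fin n → ℕ) × ℕ) :=
  Finset.filter (fun d => (∑ i, d.1 i) + d.2 ≤ s)
    ((Fintype.piFinset fun _ : Fin n => Finset.range (s + 1)) ×ˢ Finset.range (s + 1))

open scoped BoundedContinuousFunction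

section MomentDeterminacy

variable {K ι : Type*}

/-- The bounded continuous functions on `K` that are polynomials in the coordinates of a map
`e : K → ι → ℝ`, the algebra to which the Stone–Weierstrass theorem is applied. Membership only asks
for equality of values, so that `e` itself need be neither continuous nor bounded. -/
def polynomialSubalgebra [TopologicalSpace K] (e : K → ι → ℝ) : StarSubalgebra ℝ (K →ᵇ ℝ) where
  carrier := {g | ∃ p : MvPolynomial ι ℝ, ∀ x, g x = MvPolynomial.eval (e x) p}
  mul_mem' := by
    rintro g h ⟨p, hp⟩ ⟨q, hq⟩
    exact ⟨p * q, fun x => by simp [hp, hq]⟩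
  add_mem' := by
    rintro g h ⟨p, hp⟩ ⟨q, hq⟩
    exact ⟨p + q, fun x => by simp [hp, hq]⟩
  algebraMap_mem' r := ⟨MvPolynomial.C r, fun x => by simp⟩
  star_mem' := by
    rintro g ⟨p, hp⟩
    exact ⟨p, fun x => by simp [hp]⟩

theorem separatesPoints_polynomialSubalgebra [TopologicalSpace K] [CompactSpace K]
    {e : K → ι → ℝ} (he : Continuous e) (he_inj : Function.Injective e) :
    ((polynomialSubalgebra e).map
      (BoundedContinuousFunction.toContinuousMapStarₐ ℝ)).SeparatesPoints := by
  intro x y hxy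
  obtain ⟨i, hi⟩ : ∃ i, e x i ≠ e y i := Function.ne_iff.mp (he_inj.ne hxy)
  let coord : K →ᵇ ℝ := .mkOfCompact ⟨fun z => e z i, (continuous_apply i).comp he⟩
  have hcoord : coord ∈ polynomialSubalgebra e := ⟨MvPolynomial.X i, fun z => by simp [coord]⟩
  exact ⟨coord, ⟨_, ⟨coord, hcoord, rfl⟩, rfl⟩, hi⟩

variable [Fintype ι]

theorem integral_eval_eq_of_forall_integral_prod_pow_eq [MeasurableSpace K] {P Q : Measure K}
    {e : K → ι → ℝ} (hP : ∀ a : ι → ℕ, Integrable (fun x => ∏ i, e x i ^ a i) P)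
    (hQ : ∀ a : ι → ℕ, Integrable (fun x => ∏ i, e x i ^ a i) Q)
    (h : ∀ a : ι → ℕ, ∫ x, ∏ i, e x i ^ a i ∂P = ∫ x, ∏ i, e x i ^ a i ∂Q)
    (p : MvPolynomial ι ℝ) :
    ∫ x, MvPolynomial.eval (e x) p ∂P = ∫ x, MvPolynomial.eval (e x) p ∂Q := by
  simp only [MvPolynomial.eval_eq']
  rw [integral_finsetSum _ fun (d : ι →₀ ℕ) _ => (hP d).const_mul _,
    integral_finsetSum _ fun (d : ι →₀ ℕ) _ => (hQ d).const_mul _]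
  simp only [integral_const_mul, h]

theorem measure_eq_of_forall_integral_prod_pow_eq_of_compactSpace [TopologicalSpace K]
    [CompactSpace K] [MeasurableSpace K] [BorelSpace K] {P Q : Measure K} [IsFiniteMeasure P]
    [IsFiniteMeasure Q] {e : K → ι → ℝ} (he : Continuous e) (he_inj : Function.Injective e)
    (h : ∀ a : ι → ℕ, ∫ x, ∏ i, e x i ^ a i ∂P = ∫ x, ∏ i, e x i ^ a i ∂Q) : P = Q := by
  have : PolishSpace K := (he.isClosedEmbedding he_inj).polishSpace
  have hint (R : Measure K) [IsFiniteMeasure R] (a : ι → ℕ) :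
      Integrable (fun x => ∏ i, e x i ^ a i) R :=
    Continuous.integrable_of_hasCompactSupport (by fun_prop) (.of_compactSpace _)
  refine ext_of_forall_mem_subalgebra_integral_eq_of_polish (𝕜 := ℝ)
    (separatesPoints_polynomialSubalgebra he he_inj) ?_
  rintro g ⟨p, hp⟩
  simpa only [hp] using
    integral_eval_eq_of_forall_integral_prod_pow_eq (hint P) (hint Q) h p

theorem measure_eq_of_forall_integral_prod_pow_eq {X : Set (ι → ℝ)} (hX : IsCompact X)
    {P Q : Measure (ι → ℝ)} [IsFiniteMeasure P] [IsFiniteMeasure Q]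
    (hP : ∀ᵐ x ∂P, x ∈ X) (hQ : ∀ᵐ x ∂Q, x ∈ X)
    (h : ∀ a : ι → ℕ, ∫ x, ∏ i, x i ^ a i ∂P = ∫ x, ∏ i, x i ^ a i ∂Q) : P = Q := by
  have : CompactSpace X := isCompact_iff_compactSpace.mp hX
  have hXm : MeasurableSet X := hX.measurableSet
  have hcomap : P.comap ((↑) : X → ι → ℝ) = Q.comap (↑) := by
    refine measure_eq_of_forall_integral_prod_pow_eq_of_compactSpace continuous_subtype_val
      Subtype.val_injective fun a => ?_
    rw [integral_subtype_comap hXm fun x => ∏ i, x i ^ a i,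
      integral_subtype_comap hXm fun x => ∏ i, x i ^ a i,
      Measure.restrict_eq_self_of_ae_mem hP, Measure.restrict_eq_self_of_ae_mem hQ, h]
  rw [← Measure.restrict_eq_self_of_ae_mem hP, ← Measure.restrict_eq_self_of_ae_mem hQ,
    ← map_comap_subtype_coe hXm, ← map_comap_subtype_coe hXm, hcomap]

end MomentDeterminacy

section ConditionalExpectation

variable {Ω : Type*} {mΩ : MeasurableSpace Ω} {ν : Measure Ω}

theorem integrable_continuous_comp_mul {E : Type*} [TopologicalSpace E] [MeasurableSpace E]
    [OpensMeasurableSpace E] {X : Set E} (hX : IsCompact X) {φ : Ω → E} (hφ : AEMeasurable φ ν)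
    (hφX : ∀ᵐ ω ∂ν, φ ω ∈ X) {h : E → ℝ} (hh : Continuous h) {g : Ω → ℝ} (hg : Integrable g ν) :
    Integrable (fun ω => h (φ ω) * g ω) ν := by
  obtain ⟨C, hC⟩ := hX.exists_bound_of_continuousOn hh.continuousOn
  exact hg.bdd_mul (hh.measurable.comp_aemeasurable hφ).aestronglyMeasurable
    (hφX.mono fun ω hω => hC _ hω)

theorem integral_map_withDensity_ofReal {E : Type*} [MeasurableSpace E] {φ : Ω → E}
    (hφ : Measurable φ) {g : Ω → ℝ} (hg : AEMeasurable g ν) {h : E → ℝ}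
    (hh : StronglyMeasurable h) :
    ∫ x, h x ∂(ν.withDensity fun ω => ENNReal.ofReal (g ω)).map φ
      = ∫ ω, h (φ ω) * max (g ω) 0 ∂ν := by
  rw [integral_map hφ.aemeasurable hh.aestronglyMeasurable,
    integral_withDensity_eq_integral_toReal_smul₀ hg.ennreal_ofReal (by simp)]
  simp only [ENNReal.toReal_ofReal', smul_eq_mul, mul_comm]

variable {ι : Type*} [Fintype ι] {X : Set (ι → ℝ)} {φ : Ω → ι → ℝ}

theorem map_withDensity_posPart_eq_map_withDensity_negPart (hX : IsCompact X) (hφ : Measurable φ)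
    (hφX : ∀ᵐ ω ∂ν, φ ω ∈ X) {g : Ω → ℝ} (hg : Integrable g ν)
    (h : ∀ a : ι → ℕ, ∫ ω, (∏ i, φ ω i ^ a i) * g ω ∂ν = 0) :
    (ν.withDensity fun ω => ENNReal.ofReal (g ω)).map φ
      = (ν.withDensity fun ω => ENNReal.ofReal (-g ω)).map φ := by
  have := isFiniteMeasure_withDensity_ofReal hg.2
  have := isFiniteMeasure_withDensity_ofReal hg.neg.2
  have hmem (ρ : Ω → ENNReal) : ∀ᵐ x ∂(ν.withDensity ρ).map φ, x ∈ X :=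
    (ae_map_iff hφ.aemeasurable hX.measurableSet).mpr
      ((withDensity_absolutelyContinuous ν ρ).ae_le hφX)
  refine measure_eq_of_forall_integral_prod_pow_eq hX (hmem _) (hmem _) fun a => ?_
  have hcont : Continuous fun x : ι → ℝ => ∏ i, x i ^ a i := by fun_prop
  have hpos := integrable_continuous_comp_mul hX hφ.aemeasurable hφX hcont hg.pos_part
  have hneg := integrable_continuous_comp_mul hX hφ.aemeasurable hφX hcont hg.neg_part
  rw [integral_map_withDensity_ofReal hφ hg.aemeasurable hcont.stronglyMeasurable,
    integral_map_withDensity_ofReal hφ hg.aemeasurable.fun_neg hcont.stronglyMeasurable,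
    ← sub_eq_zero, ← integral_sub hpos hneg]
  simpa only [← mul_sub, max_zero_sub_max_neg_zero_eq_self] using h a

theorem setIntegral_preimage_eq_zero_of_forall_integral_prod_pow_mul_eq_zero (hX : IsCompact X)
    (hφ : Measurable φ) (hφX : ∀ᵐ ω ∂ν, φ ω ∈ X) {g : Ω → ℝ} (hg : Integrable g ν)
    (h : ∀ a : ι → ℕ, ∫ ω, (∏ i, φ ω i ^ a i) * g ω ∂ν = 0) {A : Set (ι → ℝ)}
    (hA : MeasurableSet A) : ∫ ω in φ ⁻¹' A, g ω ∂ν = 0 := by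
  have hmass : ∫⁻ ω in φ ⁻¹' A, ENNReal.ofReal (g ω) ∂ν
      = ∫⁻ ω in φ ⁻¹' A, ENNReal.ofReal (-g ω) ∂ν := by
    simpa only [Measure.map_apply hφ hA, withDensity_apply _ (hφ hA)] using
      DFunLike.congr_fun (map_withDensity_posPart_eq_map_withDensity_negPart hX hφ hφX hg h) A
  rw [integral_eq_lintegral_pos_part_sub_lintegral_neg_part hg.integrableOn, hmass, sub_self]

theorem condExp_comap_ae_eq_of_forall_integral_prod_pow_mul_eq [IsFiniteMeasure ν]
    (hX : IsCompact X) (hφ : Measurable φ) (hφX : ∀ᵐ ω ∂ν, φ ω ∈ X) {u v : Ω → ℝ}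
    (hu : Integrable u ν) (hv : Integrable v ν)
    (h : ∀ a : ι → ℕ, ∫ ω, (∏ i, φ ω i ^ a i) * u ω ∂ν = ∫ ω, (∏ i, φ ω i ^ a i) * v ω ∂ν) :
    ν[u | MeasurableSpace.comap φ inferInstance]
      =ᵐ[ν] ν[v | MeasurableSpace.comap φ inferInstance] := by
  have horth (a : ι → ℕ) : ∫ ω, (∏ i, φ ω i ^ a i) * (u - v) ω ∂ν = 0 := by
    have hcont : Continuous fun x : ι → ℝ => ∏ i, x i ^ a i := by fun_prop
    simp only [Pi.sub_apply, mul_sub]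
    rw [integral_sub (integrable_continuous_comp_mul hX hφ.aemeasurable hφX hcont hu)
      (integrable_continuous_comp_mul hX hφ.aemeasurable hφX hcont hv), h, sub_self]
  refine ae_eq_condExp_of_forall_setIntegral_eq hφ.comap_le hv
    (fun _ _ _ => integrable_condExp.integrableOn) ?_
    stronglyMeasurable_condExp.aestronglyMeasurable
  rintro _ ⟨A, hA, rfl⟩ -
  rw [setIntegral_condExp hφ.comap_le hu ⟨A, hA, rfl⟩, ← sub_eq_zero,
    ← integral_sub hu.integrableOn hv.integrableOn]
  exact setIntegral_preimage_eq_zero_of_forall_integral_prod_pow_mul_eq_zero hX hφ hφX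
    (hu.sub hv) horth hA

theorem integral_mul_comp_condExp_le {m : MeasurableSpace Ω} (hm : m ≤ mΩ)
    [SigmaFinite (ν.trim hm)] {E : Type*} [NormedAddCommGroup E] [NormedSpace ℝ E]
    [CompleteSpace E] {ψ : E → ℝ} (hψ : ConvexOn ℝ univ ψ) (hψ_cont : LowerSemicontinuous ψ)
    (hψ_nonneg : 0 ≤ ψ) {Y : Ω → E} (hY : Integrable Y ν) (hψY : Integrable (ψ ∘ Y) ν)
    {w : Ω → ℝ} (hw : StronglyMeasurable[m] w) (hw_nonneg : 0 ≤ w)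
    (hwY : Integrable (w * ψ ∘ Y) ν) :
    ∫ ω, w ω * ψ (ν[Y | m] ω) ∂ν ≤ ∫ ω, w ω * ψ (Y ω) ∂ν := by
  have hpull : ν[w * ψ ∘ Y | m] =ᵐ[ν] w * ν[ψ ∘ Y | m] :=
    condExp_mul_of_stronglyMeasurable_left hw hwY hψY
  calc ∫ ω, w ω * ψ (ν[Y | m] ω) ∂ν
      ≤ ∫ ω, ν[w * ψ ∘ Y | m] ω ∂ν := by
        refine integral_mono_of_nonneg
          (.of_forall fun ω => mul_nonneg (hw_nonneg ω) (hψ_nonneg _)) integrable_condExp ?_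
        filter_upwards [hψ.map_condExp_le_univ hm hψ_cont hY hψY, hpull] with ω hJensen hω
        exact (mul_le_mul_of_nonneg_left hJensen (hw_nonneg ω)).trans_eq hω.symm
    _ = ∫ ω, w ω * ψ (Y ω) ∂ν := integral_condExp hm

end ConditionalExpectation

section MatchingMoments

variable {ι : Type*} [Fintype ι] {X : Set (ι → ℝ)} {lam : Measure (ι → ℝ)} {f : (ι → ℝ) → ℝ}
  {ν : Measure ((ι → ℝ) × ℝ)} [IsFiniteMeasure ν]

theorem map_fst_eq_of_forall_integral_prod_pow_eq [IsFiniteMeasure lam] (hX : IsCompact X)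
    (hlam : ∀ᵐ x ∂lam, x ∈ X) (hν : ∀ᵐ p ∂ν, p.1 ∈ X)
    (h : ∀ a : ι → ℕ, ∫ p, ∏ i, p.1 i ^ a i ∂ν = ∫ x, ∏ i, x i ^ a i ∂lam) :
    ν.map Prod.fst = lam := by
  refine measure_eq_of_forall_integral_prod_pow_eq hX
    ((ae_map_iff measurable_fst.aemeasurable hX.measurableSet).mpr hν) hlam fun a => ?_
  rw [integral_map measurable_fst.aemeasurable
    (Continuous.aestronglyMeasurable (by fun_prop)), h]

theorem condExp_snd_ae_eq_of_forall_integral_prod_pow_mul_eq (hX : IsCompact X)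
    (hν : ∀ᵐ p ∂ν, p.1 ∈ X) (hf : Integrable f (ν.map Prod.fst)) (hsnd : Integrable Prod.snd ν)
    (h : ∀ a : ι → ℕ, ∫ p, (∏ i, p.1 i ^ a i) * p.2 ∂ν
      = ∫ x, (∏ i, x i ^ a i) * f x ∂ν.map Prod.fst) :
    ν[Prod.snd | MeasurableSpace.comap Prod.fst inferInstance] =ᵐ[ν] f ∘ Prod.fst := by
  have hfst : AEMeasurable (Prod.fst : (ι → ℝ) × ℝ → ι → ℝ) ν := measurable_fst.aemeasurable
  have hmoments (a : ι → ℕ) : ∫ p, (∏ i, p.1 i ^ a i) * p.2 ∂ν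
      = ∫ p, (∏ i, p.1 i ^ a i) * (f ∘ Prod.fst) p ∂ν := by
    rw [h, integral_map hfst]
    · rfl
    · exact (Continuous.aestronglyMeasurable (by fun_prop)).mul hf.aestronglyMeasurable
  have hf_fst : Integrable (f ∘ Prod.fst) ν := hf.comp_aemeasurable hfst
  exact (condExp_comap_ae_eq_of_forall_integral_prod_pow_mul_eq hX measurable_fst hν hsnd hf_fst
    hmoments).trans (condExp_of_aestronglyMeasurable' measurable_fst.comap_le
      (hf.aestronglyMeasurable.comp_ae_measurable' hfst) hf_fst)

theorem integral_prod_pow_mul_pow_le_of_condExp_snd_ae_eq (hX : IsCompact X)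
    (hν : ∀ᵐ p ∂ν, p.1 ∈ X) (hf : AEStronglyMeasurable f (ν.map Prod.fst))
    (hsnd : Integrable Prod.snd ν)
    (hcond : ν[Prod.snd | MeasurableSpace.comap Prod.fst inferInstance] =ᵐ[ν] f ∘ Prod.fst)
    (a : ι → ℕ) {k : ℕ} (hpow : Integrable (fun p => p.2 ^ (2 * k)) ν) :
    ∫ x, (∏ i, x i ^ (2 * a i)) * f x ^ (2 * k) ∂ν.map Prod.fst
      ≤ ∫ p, (∏ i, p.1 i ^ (2 * a i)) * p.2 ^ (2 * k) ∂ν := by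
  have hweight : Continuous fun x : ι → ℝ => ∏ i, x i ^ (2 * a i) := by fun_prop
  calc ∫ x, (∏ i, x i ^ (2 * a i)) * f x ^ (2 * k) ∂ν.map Prod.fst
      = ∫ p, (∏ i, p.1 i ^ (2 * a i)) * f p.1 ^ (2 * k) ∂ν :=
        integral_map measurable_fst.aemeasurable (hweight.aestronglyMeasurable.mul (hf.pow _))
    _ = ∫ p, (∏ i, p.1 i ^ (2 * a i))
          * (ν[Prod.snd | MeasurableSpace.comap Prod.fst inferInstance] p) ^ (2 * k) ∂ν :=
        integral_congr_ae (hcond.mono fun p hp => by simp only [hp, Function.comp_apply])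
    _ ≤ ∫ p, (∏ i, p.1 i ^ (2 * a i)) * p.2 ^ (2 * k) ∂ν :=
        integral_mul_comp_condExp_le measurable_fst.comap_le (even_two_mul k).convexOn_pow
          (continuous_pow _).lowerSemicontinuous (fun y => (even_two_mul k).pow_nonneg y) hsnd hpow
          (hweight.measurable.comp (comap_measurable Prod.fst)).stronglyMeasurable
          (fun p => Finset.prod_nonneg fun i _ => (even_two_mul (a i)).pow_nonneg _)
          (integrable_continuous_comp_mul hX measurable_fst.aemeasurable hν hweight hpow)

theorem trace_bound_for_matching_measures_general [IsFiniteMeasure lam] (hX : IsCompact X)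
    (hlam : ∀ᵐ x ∂lam, x ∈ X) (hf : Integrable f lam) (hν : ∀ᵐ p ∂ν, p.1 ∈ X)
    (hνint : ∀ k : ℕ, Integrable (fun p => p.2 ^ k) ν)
    (hνmom : ∀ d : (ι → ℕ) × ℕ, d.2 ≤ 1 →
      ∫ p, (∏ i, p.1 i ^ d.1 i) * p.2 ^ d.2 ∂ν = ∫ x, (∏ i, x i ^ d.1 i) * f x ^ d.2 ∂lam)
    (d : (ι → ℕ) × ℕ) :
    ∫ x, (∏ i, x i ^ (2 * d.1 i)) * f x ^ (2 * d.2) ∂lam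
      ≤ ∫ p, (∏ i, p.1 i ^ (2 * d.1 i)) * p.2 ^ (2 * d.2) ∂ν := by
  have hmarginal : ν.map Prod.fst = lam :=
    map_fst_eq_of_forall_integral_prod_pow_eq hX hlam hν fun a => by
      simpa only [pow_zero, mul_one] using hνmom (a, 0) zero_le_one
  subst hmarginal
  have hsnd : Integrable Prod.snd ν := by simpa only [pow_one] using hνint 1
  have hcond : ν[Prod.snd | MeasurableSpace.comap Prod.fst inferInstance] =ᵐ[ν] f ∘ Prod.fst :=
    condExp_snd_ae_eq_of_forall_integral_prod_pow_mul_eq hX hν hf hsnd fun a => by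
      simpa only [pow_one] using hνmom (a, 1) le_rfl
  exact integral_prod_pow_mul_pow_le_of_condExp_snd_ae_eq hX hν hf.aestronglyMeasurable hsnd hcond
    d.1 (hνint _)

end MatchingMoments

/-- If `ν` is a finite nonnegative Borel measure on `X × Y` whose moments
agree with those of `μ = δ_{f(x)}(dy) λ(dx)` for all indices `d ∈ D = {d : d_y ≤ 1}`,
then `Σ_{|d| ≤ s} μ_{2d} ≤ Σ_{|d| ≤ s} ν_{2d}` for every fixed `s`. -/
theorem trace_bound_for_matching_measures
    (n : ℕ) (hn : 1 ≤ n)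
    (X : Set (Fin n → ℝ)) (hXsub : X ⊆ Icc 0 1) (hXc : IsCompact X)
    (γ : ℝ) (hγ : 0 < γ)
    (lam : Measure (Fin n → ℝ)) [IsProbabilityMeasure lam] (hlam : lam Xᶜ = 0)
    (f : (Fin n → ℝ) → ℝ) (hf : Measurable f) (hfY : ∀ x ∈ X, f x ∈ Icc 0 γ)
    (s : ℕ)
    (ν : Measure ((Fin n → ℝ) × ℝ)) [IsFiniteMeasure ν]
    (hνsupp : ν ((X ×ˢ Icc (0:ℝ) γ)ᶜ) = 0)
    (hνint : ∀ d : (Fin n → ℕ) × ℕ,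
      Integrable (fun p : (Fin n → ℝ) × ℝ => (∏ i, p.1 i ^ d.1 i) * p.2 ^ d.2) ν)
    (hνmom : ∀ d : (Fin n → ℕ) × ℕ, d.2 ≤ 1 →
      ∫ p : (Fin n → ℝ) × ℝ, (∏ i, p.1 i ^ d.1 i) * p.2 ^ d.2 ∂ν
        = ∫ x, (∏ i, x i ^ d.1 i) * f x ^ d.2 ∂lam) :
    ∑ d ∈ idx n s, ∫ x, (∏ i, x i ^ (2 * d.1 i)) * f x ^ (2 * d.2) ∂lam
      ≤ ∑ d ∈ idx n s,
          ∫ p : (Fin n → ℝ) × ℝ, (∏ i, p.1 i ^ (2 * d.1 i)) * p.2 ^ (2 * d.2) ∂ν := by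
  have hlamX : ∀ᵐ x ∂lam, x ∈ X := hlam
  have hνX : ∀ᵐ p ∂ν, p ∈ X ×ˢ Icc 0 γ := hνsupp
  have hfint : Integrable f lam := .of_mem_Icc 0 γ hf.aemeasurable (hlamX.mono hfY)
  exact Finset.sum_le_sum fun d _ => trace_bound_for_matching_measures_general hXc hlamX hfint
    (hνX.mono fun _ hp => hp.1) (fun k => by simpa using hνint (0, k)) hνmom d
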